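/- Let (i_t, j_t, λ_t), t ≥ 0, be any sequence with 1 ≤ i_t < j_t ≤ n and λ_t ∈ [0,1]. Let (X_t) be the deterministic sequence in M_n obtained from a given X_0 ∈ M_n by applying at each time t the Gibbs-sampler update rule on M_n with (i_t, j_t, λ_t), and let (S_t) be the deterministic sequence in Δ_n obtained from a given S_0 ∈ Δ_n by applying at each time t the simplex update S_{t+1}[i_t] = λ_t(S_t[i_t] + S_t[j_t]), S_{t+1}[j_t] = (1−λ_t)(S_t[i_t] + S_t[j_t]), with all other coordinates unchanged. If X_0[i,1] ≥ S_0[i] for all 1 ≤ i ≤ n, then X_t[i,1] ≥ S_t[i] for all t ≥ 0 and all 1 ≤ i ≤ n. -/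

import Mathlib

open MeasureTheory

noncomputable section

/-- Uniform probability measure on a finset. -/
def unifOn {α : Type*} [MeasurableSpace α] (s : Finset α) : Measure α :=
  (s.card : ENNReal)⁻¹ • ∑ a ∈ s, Measure.dirac a

/-- Total variation distance between two measures. -/
def tvDist {α : Type*} [MeasurableSpace α] (μ ν : Measure α) : ℝ :=
  ⨆ A : {A : Set α // MeasurableSet A}, ((μ A).toReal - (ν A).toReal)

/-- The set `M_n` of nonnegative `n × 2` matrices with row sums `2` and column sums `n`. -/
def MSet (n : ℕ) : Set (Fin n × Fin 2 → ℝ) :=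
  {x | (∀ p, 0 ≤ x p) ∧ (∀ i : Fin n, x (i, 0) + x (i, 1) = 2) ∧
    (∀ j : Fin 2, ∑ i : Fin n, x (i, j) = n)}

/-- The uniform (normalized `(n-1)`-dimensional Hausdorff) measure on `M_n`. -/
def UM (n : ℕ) : Measure (Fin n × Fin 2 → ℝ) :=
  (μH[(n : ℝ) - 1] (MSet n))⁻¹ • (μH[(n : ℝ) - 1]).restrict (MSet n)

/-- One step of the Gibbs sampler on `M_n`, updating the pair of rows `u.1 = (i, j)`
using the uniform variable `u.2 = λ`. -/
def stepM (n : ℕ) (x : Fin n × Fin 2 → ℝ) (u : (Fin n × Fin n) × ℝ) :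
    Fin n × Fin 2 → ℝ := fun p =>
  let i := u.1.1
  let j := u.1.2
  let l := u.2
  let d := 2 - x (i, 0) - x (j, 0)
  if p = (i, 0) then (if 0 ≤ d then l * (2 - d) else 2 * l - (1 - l) * d)
  else if p = (j, 0) then (if 0 ≤ d then (1 - l) * (2 - d) else 2 * (1 - l) - l * d)
  else if p = (i, 1) then (if 0 ≤ d then 2 * (1 - l) + l * d else (1 - l) * (2 + d))
  else if p = (j, 1) then (if 0 ≤ d then 2 * l + (1 - l) * d else l * (2 + d))
  else x p

/-- The set of ordered pairs `(i, j)` with `i < j`. -/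
def pairsF (n : ℕ) : Finset (Fin n × Fin n) := Finset.univ.filter fun p => p.1 < p.2

/-- Law of the random update datum: `(i, j)` uniform among pairs `i < j`, and
`λ` uniform on `[0,1]`. -/
def driveM (n : ℕ) : Measure ((Fin n × Fin n) × ℝ) :=
  (unifOn (pairsF n)).prod ((volume : Measure ℝ).restrict (Set.Icc 0 1))

/-- Law of the Gibbs sampler on `M_n` after `T` steps started at `x`. -/
def lawM (n : ℕ) (x : Fin n × Fin 2 → ℝ) (T : ℕ) : Measure (Fin n × Fin 2 → ℝ) :=
  Measure.map (fun ω : Fin T → (Fin n × Fin n) × ℝ => (List.ofFn ω).foldl (stepM n) x)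
    (Measure.pi fun _ => driveM n)

/-- Law of the `(T+1)`-step path of the Gibbs sampler on `M_n` with initial distribution `μ`. -/
def pathM (n T : ℕ) (μ : Measure (Fin n × Fin 2 → ℝ)) :
    Measure (Fin (T + 1) → Fin n × Fin 2 → ℝ) :=
  Measure.map (fun p : (Fin n × Fin 2 → ℝ) × (Fin T → (Fin n × Fin n) × ℝ) =>
      fun s : Fin (T + 1) => ((List.ofFn p.2).take s).foldl (stepM n) p.1)
    (μ.prod (Measure.pi fun _ => driveM n))


/-- The standard simplex in `ℝ^n`. -/
def simplexS (n : ℕ) : Set (Fin n → ℝ) :=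
  {x | (∀ i, 0 ≤ x i) ∧ ∑ i, x i = 1}

/-- The Gibbs-sampler update of `s` on the simplex at the pair `(i, j)` with parameter `l`. -/
def stepS (n : ℕ) (s : Fin n → ℝ) (i j : Fin n) (l : ℝ) : Fin n → ℝ :=
  Function.update (Function.update s i (l * (s i + s j))) j ((1 - l) * (s i + s j))

theorem stepS_mem_simplex (n : ℕ) (s : Fin n → ℝ) (i j : Fin n) (hij : i ≠ j) (l : ℝ)
    (hl : l ∈ Set.Icc (0 : ℝ) 1) (hs : s ∈ simplexS n) : stepS n s i j l ∈ simplexS n := by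
  obtain ⟨h0, h1⟩ := hs
  obtain ⟨hl0, hl1⟩ := hl
  have hsum : 0 ≤ s i + s j := add_nonneg (h0 i) (h0 j)
  constructor
  · intro k
    unfold stepS
    by_cases hkj : k = j
    · subst hkj
      simp only [Function.update_self]
      exact mul_nonneg (by linarith) hsum
    · rw [Function.update_of_ne hkj]
      by_cases hki : k = i
      · subst hki
        simp only [Function.update_self]
        exact mul_nonneg hl0 hsum
      · rw [Function.update_of_ne hki]
        exact h0 k
  · have key : ∀ k, stepS n s i j l k = s k + (if k = i then l * (s i + s j) - s i else 0)
        + (if k = j then (1 - l) * (s i + s j) - s j else 0) := by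
      intro k
      unfold stepS
      by_cases hkj : k = j
      · subst hkj
        simp [Ne.symm hij]
      · by_cases hki : k = i
        · subst hki
          simp [hij]
        · simp [hki, hkj]
    simp only [key, Finset.sum_add_distrib, Finset.sum_ite_eq', Finset.mem_univ, if_true, h1]
    ring

/-- Monotone domination of the simplex Gibbs sampler by the first column of the Gibbs
sampler on narrow matrices, when both are driven by the same update sequence. -/
theorem narrow_matrices_dominate_simplex
    (n : ℕ) (I J : ℕ → Fin n) (hIJ : ∀ t, I t < J t)
    (lam : ℕ → ℝ) (hlam : ∀ t, lam t ∈ Set.Icc (0 : ℝ) 1)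
    (X : ℕ → Fin n × Fin 2 → ℝ) (S : ℕ → Fin n → ℝ)
    (hX0 : X 0 ∈ MSet n) (hS0 : S 0 ∈ simplexS n)
    (hXstep : ∀ t, X (t + 1) = stepM n (X t) ((I t, J t), lam t))
    (hSstep : ∀ t, S (t + 1) = stepS n (S t) (I t) (J t) (lam t))
    (hinit : ∀ i, S 0 i ≤ X 0 (i, 0)) :
    ∀ t i, S t i ≤ X t (i, 0) := by
  have hS : ∀ t, S t ∈ simplexS n := by
    intro t
    induction t with
    | zero => exact hS0
    | succ t ih =>
      rw [hSstep]
      exact stepS_mem_simplex n _ _ _ (hIJ t).ne _ (hlam t) ih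
  intro t
  induction t with
  | zero => exact hinit
  | succ t ih =>
    intro k
    obtain ⟨h0, h1⟩ := hS t
    obtain ⟨hl0, hl1⟩ := hlam t
    have hij := (hIJ t).ne
    have hle : S t (I t) + S t (J t) ≤ 1 := by
      rw [← h1, ← Finset.sum_pair hij]
      exact Finset.sum_le_sum_of_subset_of_nonneg (Finset.subset_univ _) (fun a _ _ => h0 a)
    have hi := ih (I t)
    have hj := ih (J t)
    rw [hXstep, hSstep]
    unfold stepS stepM
    generalize hl : lam t = l at *
    by_cases hki : k = I t
    · subst hki
      rw [Function.update_of_ne hij]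
      simp only [Function.update_self, if_true]
      split_ifs with hd
      · exact mul_le_mul_of_nonneg_left (by linarith) hl0
      · nlinarith
    · by_cases hkj : k = J t
      · subst hkj
        simp only [Function.update_self, Prod.mk.injEq, hki, false_and, if_false, if_true]
        split_ifs with hd
        · exact mul_le_mul_of_nonneg_left (by linarith) (by linarith)
        · nlinarith
      · simp [Function.update_of_ne, hki, hkj, ih k]

end
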